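/- arXiv:2201.09524 — 3 statements merged into one kernel-verified Lean document; each statement's English description precedes it below -/
import Mathlib

section
/- For every integer n ≥ 0 and every t ∈ ℝ, the Taylor remainder of the cosine satisfies the sign condition (−1)^{n+1} ( cos t − Σ_{i=0}^{n} (−1)^i t^{2i}/(2i)! ) ≥ 0. -/
open scoped BigOperators

/-!
The signed remainder `Rₙ(t) = (-1)ⁿ⁺¹ (cos t - ∑_{i ≤ n} (-1)ⁱ t²ⁱ / (2i)!)` satisfies
`Rₙ₊₁'' = Rₙ` and `Rₙ₊₁(0) = Rₙ₊₁'(0) = 0`. Hence if `Rₙ ≥ 0`, then `Rₙ₊₁` is convex with critical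
point `0`, so its minimum value is `Rₙ₊₁(0) = 0`. The induction starts from `R₀ = 1 - cos`.
-/

open Finset

lemma isMinOn_of_hasDerivWithinAt2_nonneg {D : Set ℝ} (hD : Convex ℝ D) {f f' f'' : ℝ → ℝ}
    (hf : ContinuousOn f D) (hf' : ∀ x ∈ interior D, HasDerivWithinAt f (f' x) (interior D) x)
    (hf'' : ∀ x ∈ interior D, HasDerivWithinAt f' (f'' x) (interior D) x)
    (hf''₀ : ∀ x ∈ interior D, 0 ≤ f'' x) {a : ℝ} (ha : a ∈ interior D) (hfa : f' a = 0) :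
    IsMinOn f D a := by
  have hconv : ConvexOn ℝ D f := convexOn_of_hasDerivWithinAt2_nonneg hD hf hf' hf'' hf''₀
  have hderiv : HasDerivAt f 0 a := hfa ▸ (hf' a ha).hasDerivAt (isOpen_interior.mem_nhds ha)
  exact hconv.isMinOn_of_rightDeriv_eq_zero ha
    (hderiv.hasDerivWithinAt.derivWithin (uniqueDiffWithinAt_Ioi a))

section PartialSums

variable {𝕜 : Type*}

/-- The first `n` terms of the Taylor series of `cos` at `0`, hence the Taylor polynomial of order
`2 * (n - 1)` for positive `n`. It is meaningful in characteristic zero; otherwise the terms whose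
factorial vanishes are `0`. -/
def cosPartialSum [Field 𝕜] (n : ℕ) (x : 𝕜) : 𝕜 :=
  ∑ i ∈ range n, (-1) ^ i * x ^ (2 * i) / (2 * i).factorial

/-- The first `n` terms of the Taylor series of `sin` at `0`, indexed so that its derivative is
`cosPartialSum n`; see there for positive characteristic. -/
def sinPartialSum [Field 𝕜] (n : ℕ) (x : 𝕜) : 𝕜 :=
  ∑ i ∈ range n, (-1) ^ i * x ^ (2 * i + 1) / (2 * i + 1).factorial

lemma cosPartialSum_succ_zero [Field 𝕜] (n : ℕ) : cosPartialSum (n + 1) (0 : 𝕜) = 1 := by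
  simp [cosPartialSum, sum_range_succ']

lemma sinPartialSum_zero [Field 𝕜] (n : ℕ) : sinPartialSum n (0 : 𝕜) = 0 := by
  simp [sinPartialSum]

variable [NontriviallyNormedField 𝕜] [CharZero 𝕜]

lemma hasDerivAt_mul_pow_succ_div_factorial (c : 𝕜) (k : ℕ) (x : 𝕜) :
    HasDerivAt (fun y ↦ c * y ^ (k + 1) / (k + 1).factorial) (c * x ^ k / k.factorial) x := by
  refine (((hasDerivAt_pow (k + 1) x).const_mul c).div_const _).congr_deriv ?_
  have hk : (k.factorial : 𝕜) ≠ 0 := mod_cast k.factorial_ne_zero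
  have hk' : (k + 1 : 𝕜) ≠ 0 := mod_cast k.succ_ne_zero
  rw [Nat.factorial_succ, Nat.add_sub_cancel]
  push_cast
  field_simp

lemma hasDerivAt_sinPartialSum (n : ℕ) (x : 𝕜) :
    HasDerivAt (sinPartialSum n) (cosPartialSum n x) x :=
  HasDerivAt.fun_sum fun i _ ↦ hasDerivAt_mul_pow_succ_div_factorial _ (2 * i) x

lemma hasDerivAt_cosPartialSum_succ (n : ℕ) (x : 𝕜) :
    HasDerivAt (cosPartialSum (n + 1)) (-sinPartialSum n x) x := by
  have hsplit : cosPartialSum (n + 1) = fun y : 𝕜 ↦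
      ∑ i ∈ range n, (-1) ^ (i + 1) * y ^ (2 * i + 1 + 1) / (2 * i + 1 + 1).factorial + 1 := by
    funext y
    simp [cosPartialSum, sum_range_succ', mul_add]
  have hterms : -sinPartialSum n x =
      ∑ i ∈ range n, (-1) ^ (i + 1) * x ^ (2 * i + 1) / (2 * i + 1).factorial := by
    simp [sinPartialSum, pow_succ (-1 : 𝕜), neg_div]
  rw [hsplit, hterms]
  exact (HasDerivAt.fun_sum fun i _ ↦
    hasDerivAt_mul_pow_succ_div_factorial _ (2 * i + 1) x).add_const 1

end PartialSums

lemma hasDerivAt_neg_one_pow_mul_sin_sub_sinPartialSum (n : ℕ) (x : ℝ) :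
    HasDerivAt (fun t ↦ (-1) ^ n * (Real.sin t - sinPartialSum n t))
      ((-1) ^ n * (Real.cos x - cosPartialSum n x)) x :=
  ((Real.hasDerivAt_sin x).sub (hasDerivAt_sinPartialSum n x)).const_mul _

lemma hasDerivAt_neg_one_pow_mul_cos_sub_cosPartialSum (n : ℕ) (x : ℝ) :
    HasDerivAt (fun t ↦ (-1) ^ (n + 1) * (Real.cos t - cosPartialSum (n + 1) t))
      ((-1) ^ n * (Real.sin x - sinPartialSum n x)) x :=
  (((Real.hasDerivAt_cos x).sub (hasDerivAt_cosPartialSum_succ n x)).const_mul _).congr_deriv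
    (by ring)

lemma neg_one_pow_mul_cos_sub_cosPartialSum_nonneg_succ {n : ℕ}
    (hn : ∀ t : ℝ, 0 ≤ (-1) ^ n * (Real.cos t - cosPartialSum n t)) (t : ℝ) :
    0 ≤ (-1) ^ (n + 1) * (Real.cos t - cosPartialSum (n + 1) t) := by
  have hcos := hasDerivAt_neg_one_pow_mul_cos_sub_cosPartialSum n
  have hsin := hasDerivAt_neg_one_pow_mul_sin_sub_sinPartialSum n
  have hmin := isMinOn_of_hasDerivWithinAt2_nonneg convex_univ
    (fun x _ ↦ (hcos x).continuousAt.continuousWithinAt) (fun x _ ↦ (hcos x).hasDerivWithinAt)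
    (fun x _ ↦ (hsin x).hasDerivWithinAt) (fun x _ ↦ hn x) (a := 0) (by simp)
    (by simp [sinPartialSum_zero])
  simpa [cosPartialSum_succ_zero] using isMinOn_univ_iff.mp hmin t

/-- for every `n ≥ 0` and every real `t`, the Taylor remainder of the
cosine satisfies `(−1)^{n+1} (cos t − Σ_{i=0}^{n} (−1)^i t^{2i}/(2i)!) ≥ 0`. -/
theorem cos_taylor_remainder_sign (n : ℕ) (t : ℝ) :
    0 ≤ (-1 : ℝ) ^ (n + 1) *
      (Real.cos t - ∑ i ∈ Finset.range (n + 1),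
        (-1 : ℝ) ^ i * t ^ (2 * i) / (2 * i).factorial) := by
  change 0 ≤ (-1) ^ (n + 1) * (Real.cos t - cosPartialSum (n + 1) t)
  induction n generalizing t with
  | zero => simpa [cosPartialSum] using Real.cos_le_one t
  | succ n ih => exact neg_one_pow_mul_cos_sub_cosPartialSum_nonneg_succ ih t
end

section
/- The generalized Lévy operator L is symmetric on smooth compactly supported functions: for all real-valued f, g ∈ C_c^∞(ℝ^d), ∫_{ℝ^d} g(x) Lf(x) dx = ∫_{ℝ^d} f(x) Lg(x) dx. -/
open scoped BigOperators
open MeasureTheory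

noncomputable section

/-- The compensated integrand `f(x+y) − f(x) − Σ_{i=1}^{2l} (1/i!) Dⁱf(x)[y,…,y]`. -/
def levyIntegrand {d : ℕ} (l : ℕ) (f : EuclideanSpace ℝ (Fin d) → ℝ)
    (x y : EuclideanSpace ℝ (Fin d)) : ℝ :=
  f (x + y) - f x - ∑ i ∈ Finset.Icc 1 (2 * l),
    (1 / (i.factorial : ℝ)) * iteratedFDeriv ℝ i f x (fun _ => y)

/-- The density `h(y)|y|^{−(2l+1+α)}` of the Lévy measure. -/
def levyWeight {d : ℕ} (l : ℕ) (α : ℝ) (h : EuclideanSpace ℝ (Fin d) → ℝ)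
    (y : EuclideanSpace ℝ (Fin d)) : ℝ :=
  h y * ‖y‖ ^ (-(2 * (l : ℝ) + 1 + α))

/-- The generalized Lévy operator
`Lf(x) = (−1)^{l+1} ∫ (f(x+y) − f(x) − Σ_{i=1}^{2l} (1/i!) Dⁱf(x)[y,…,y]) h(y)|y|^{−(2l+1+α)} dy`. -/
def levyOp {d : ℕ} (l : ℕ) (α : ℝ) (h : EuclideanSpace ℝ (Fin d) → ℝ)
    (f : EuclideanSpace ℝ (Fin d) → ℝ) (x : EuclideanSpace ℝ (Fin d)) : ℝ :=
  (-1 : ℝ) ^ (l + 1) * ∫ y, levyIntegrand l f x y * levyWeight l α h y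

/-!
Write `R f x y` for the Taylor remainder `f (x + y) - ∑ₖ Dᵏf(x)[y, …, y] / k!`. For a fixed
increment `y`, translation invariance gives `∫ g(x) f(x + y) dx = ∫ f(x) g(x - y) dx`, and `k`-fold
integration by parts gives `∫ g Dᵏf[y, …, y] = (-1)ᵏ ∫ f Dᵏg[y, …, y] = ∫ f Dᵏg[-y, …, -y]`; hence
`∫ g(x) R f x y dx = ∫ f(x) R g x (-y) dx`. Integrating this against an even weight in `y` makes the
sign disappear. Fubini applies because `|R f x y|` is at most a constant times `|y|^(n + 1)`, where
`n` is the order of the Taylor polynomial, and the weight integrates `|y|^(n + 1)`.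
-/

section DiagonalDerivative

variable {E F : Type*} [NormedAddCommGroup E] [NormedSpace ℝ E]
  [NormedAddCommGroup F] [NormedSpace ℝ F] {k : ℕ} {f : E → F}

lemma contDiff_iteratedFDeriv_apply_const {m n : WithTop ℕ∞} (hf : ContDiff ℝ n f)
    (hmk : m + k ≤ n) (y : E) : ContDiff ℝ m fun x ↦ iteratedFDeriv ℝ k f x (fun _ ↦ y) :=
  (ContinuousMultilinearMap.apply ℝ (fun _ : Fin k ↦ E) F (fun _ ↦ y)).contDiff.comp
    (hf.iteratedFDeriv_right hmk)

lemma hasCompactSupport_iteratedFDeriv_apply_const (hf : HasCompactSupport f) (k : ℕ) (y : E) :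
    HasCompactSupport fun x ↦ iteratedFDeriv ℝ k f x (fun _ ↦ y) :=
  (hf.iteratedFDeriv (𝕜 := ℝ) k).comp_left (g := fun L : E [×k]→L[ℝ] F ↦ L fun _ ↦ y) rfl

lemma iteratedFDeriv_apply_neg_const (k : ℕ) (f : E → F) (x y : E) :
    iteratedFDeriv ℝ k f x (fun _ ↦ -y) =
      (-1 : ℝ) ^ k • iteratedFDeriv ℝ k f x (fun _ ↦ y) := by
  simpa using (iteratedFDeriv ℝ k f x).map_smul_univ (fun _ ↦ (-1 : ℝ)) (fun _ ↦ y)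

lemma iteratedFDeriv_succ_apply_const_eq_fderiv (hf : ContDiff ℝ (k + 1 : ℕ) f) (x y : E) :
    iteratedFDeriv ℝ (k + 1) f x (fun _ ↦ y) =
      fderiv ℝ (fun z ↦ iteratedFDeriv ℝ k f z (fun _ ↦ y)) x y :=
  (hf.differentiable_iteratedFDeriv (mod_cast k.lt_succ_self)).differentiableAt
    |>.iteratedFDeriv_succ_apply_left'

lemma iteratedFDeriv_succ_apply_const_eq_iteratedFDeriv_fderiv
    (hf : ContDiff ℝ (k + 1 : ℕ) f) (x y : E) :
    iteratedFDeriv ℝ (k + 1) f x (fun _ ↦ y) =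
      iteratedFDeriv ℝ k (fun z ↦ fderiv ℝ f z y) x (fun _ ↦ y) := by
  rw [iteratedFDeriv_succ_apply_right]
  exact (iteratedFDeriv_clm_apply_const_apply (hf.fderiv_right (m := k) le_rfl) le_rfl).symm

end DiagonalDerivative

section IntegrableMul

variable {X : Type*} [TopologicalSpace X] [MeasurableSpace X] [OpensMeasurableSpace X]
  {μ : Measure X} [IsFiniteMeasureOnCompacts μ] {f g : X → ℝ}

lemma integrable_mul_of_hasCompactSupport (hg : Continuous g) (hf : Continuous f)
    (hgs : HasCompactSupport g) : Integrable (fun x ↦ g x * f x) μ :=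
  (hg.mul hf).integrable_of_hasCompactSupport hgs.mul_right

end IntegrableMul

section IntegrationByParts

variable {E : Type*} [NormedAddCommGroup E] [NormedSpace ℝ E] [FiniteDimensional ℝ E]
  [MeasurableSpace E] [BorelSpace E] {μ : Measure E} [μ.IsAddHaarMeasure] {f g : E → ℝ}

lemma integral_mul_fderiv_eq_neg_fderiv_mul_of_hasCompactSupport (hf : ContDiff ℝ 1 f)
    (hg : ContDiff ℝ 1 g) (hgs : HasCompactSupport g) (y : E) :
    ∫ x, g x * fderiv ℝ f x y ∂μ = -∫ x, fderiv ℝ g x y * f x ∂μ := by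
  have hf' : Continuous fun x ↦ fderiv ℝ f x y :=
    (hf.continuous_fderiv one_ne_zero).clm_apply continuous_const
  have hg' : Continuous fun x ↦ fderiv ℝ g x y :=
    (hg.continuous_fderiv one_ne_zero).clm_apply continuous_const
  exact integral_mul_fderiv_eq_neg_fderiv_mul_of_integrable
    (integrable_mul_of_hasCompactSupport hg' hf.continuous (hgs.fderiv_apply ℝ y))
    (integrable_mul_of_hasCompactSupport hg.continuous hf' hgs)
    (integrable_mul_of_hasCompactSupport hg.continuous hf.continuous hgs)
    (fun _ _ ↦ hg.differentiable one_ne_zero _) (fun _ _ ↦ hf.differentiable one_ne_zero _)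

lemma integral_mul_iteratedFDeriv_apply_const {k : ℕ} (hf : ContDiff ℝ k f) (hg : ContDiff ℝ k g)
    (hgs : HasCompactSupport g) (y : E) :
    ∫ x, g x * iteratedFDeriv ℝ k f x (fun _ ↦ y) ∂μ =
      (-1) ^ k * ∫ x, iteratedFDeriv ℝ k g x (fun _ ↦ y) * f x ∂μ := by
  induction k generalizing f with
  | zero => simp
  | succ k ih =>
    have hDf : ContDiff ℝ k fun x ↦ fderiv ℝ f x y :=
      (hf.fderiv_right (m := k) le_rfl).clm_apply contDiff_const
    have hDg : ContDiff ℝ 1 fun x ↦ iteratedFDeriv ℝ k g x (fun _ ↦ y) :=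
      contDiff_iteratedFDeriv_apply_const hg (by rw [add_comm]; norm_cast) y
    calc ∫ x, g x * iteratedFDeriv ℝ (k + 1) f x (fun _ ↦ y) ∂μ
        = ∫ x, g x * iteratedFDeriv ℝ k (fun z ↦ fderiv ℝ f z y) x (fun _ ↦ y) ∂μ := by
          simp_rw [iteratedFDeriv_succ_apply_const_eq_iteratedFDeriv_fderiv hf]
      _ = (-1) ^ k * ∫ x, iteratedFDeriv ℝ k g x (fun _ ↦ y) * fderiv ℝ f x y ∂μ :=
          ih hDf (hg.of_le (mod_cast k.le_succ))
      _ = (-1) ^ k * -∫ x, iteratedFDeriv ℝ (k + 1) g x (fun _ ↦ y) * f x ∂μ := by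
          simp_rw [iteratedFDeriv_succ_apply_const_eq_fderiv hg]
          rw [integral_mul_fderiv_eq_neg_fderiv_mul_of_hasCompactSupport
            (hf.of_le (mod_cast k.succ_pos)) hDg
            (hasCompactSupport_iteratedFDeriv_apply_const hgs k y)]
      _ = (-1) ^ (k + 1) * ∫ x, iteratedFDeriv ℝ (k + 1) g x (fun _ ↦ y) * f x ∂μ := by ring

end IntegrationByParts

section TaylorRemainder

variable {E F : Type*} [NormedAddCommGroup E] [NormedSpace ℝ E]
  [NormedAddCommGroup F] [NormedSpace ℝ F]

/-- The error at `x + y` of the Taylor polynomial of order `n` of `f` at `x`, as a function of the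
base point `x` and the increment `y`. This is the compensated difference on which Lévy-type
operators are built; the constant term `f x` is the summand `k = 0`. -/
def taylorRemainder (n : ℕ) (f : E → F) (x y : E) : F :=
  f (x + y) - ∑ k ∈ Finset.range (n + 1),
    (k.factorial : ℝ)⁻¹ • iteratedFDeriv ℝ k f x (fun _ ↦ y)

lemma taylorRemainder_zero_right (n : ℕ) (f : E → F) (x : E) : taylorRemainder n f x 0 = 0 := by
  have hk : ∀ k, iteratedFDeriv ℝ (k + 1) f x (fun _ ↦ 0) = 0 := fun k ↦
    (iteratedFDeriv ℝ (k + 1) f x).map_coord_zero 0 rfl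
  simp [taylorRemainder, Finset.sum_range_succ', hk]

lemma continuous_taylorRemainder {n : ℕ} {f : E → F} (hf : ContDiff ℝ n f) :
    Continuous fun p : E × E ↦ taylorRemainder n f p.1 p.2 := by
  refine (hf.continuous.comp continuous_add).sub (continuous_finsetSum _ fun k hk ↦ ?_)
  have hDk : Continuous (iteratedFDeriv ℝ k f) :=
    hf.continuous_iteratedFDeriv (mod_cast Finset.mem_range_succ_iff.mp hk)
  have hpair : Continuous fun p : E × E ↦ (iteratedFDeriv ℝ k f p.1, fun _ : Fin k ↦ p.2) := by
    fun_prop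
  exact (continuous_eval.comp hpair).const_smul _

lemma norm_taylorRemainder_le [CompleteSpace F] {n : ℕ} {f : E → F} {C : ℝ}
    (hf : ContDiff ℝ (n + 1 : ℕ) f) (hC : ∀ z, ‖iteratedFDeriv ℝ (n + 1) f z‖ ≤ C) (x y : E) :
    ‖taylorRemainder n f x y‖ ≤ C * ‖y‖ ^ (n + 1) := by
  have hfactorial : ‖(n.factorial : ℝ)⁻¹‖ ≤ 1 := by
    rw [norm_inv, Real.norm_natCast]
    exact inv_le_one_of_one_le₀ (mod_cast n.factorial_pos)
  have hderiv (z : E) : ‖iteratedFDeriv ℝ (n + 1) f z (fun _ ↦ y)‖ ≤ C * ‖y‖ ^ (n + 1) := by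
    simpa using (iteratedFDeriv ℝ (n + 1) f z).le_of_opNorm_le (hC z) (fun _ ↦ y)
  have hintegral :
      ‖∫ t in (0 : ℝ)..1, (1 - t) ^ n • iteratedFDeriv ℝ (n + 1) f (x + t • y) (fun _ ↦ y)‖ ≤
        C * ‖y‖ ^ (n + 1) := by
    refine (intervalIntegral.norm_integral_le_of_norm_le_const fun t ht ↦ ?_).trans_eq
      (by rw [sub_zero, abs_one, mul_one])
    rw [Set.uIoc_of_le zero_le_one] at ht
    have hweight : ‖(1 - t) ^ n‖ ≤ 1 := by
      rw [norm_pow, Real.norm_of_nonneg (sub_nonneg.mpr ht.2)]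
      exact pow_le_one₀ (sub_nonneg.mpr ht.2) (by linarith [ht.1])
    rw [norm_smul]
    exact (mul_le_of_le_one_left (norm_nonneg _) hweight).trans (hderiv _)
  rw [taylorRemainder, map_add_eq_sum_add_integral_iteratedFDeriv fun t _ ↦ hf.contDiffAt,
    add_sub_cancel_left, norm_smul]
  exact (mul_le_of_le_one_left (norm_nonneg _) hfactorial).trans hintegral

end TaylorRemainder

section Fubini

variable {E : Type*} [NormedAddCommGroup E] [NormedSpace ℝ E] [MeasurableSpace E]
  {μ ν : Measure E} {n : ℕ} {f g w : E → ℝ}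

lemma integral_mul_taylorRemainder_eq_sub_sum {y : E}
    (hint : Integrable (fun x ↦ g x * f (x + y)) μ)
    (hintD : ∀ k ≤ n, Integrable (fun x ↦ g x * iteratedFDeriv ℝ k f x (fun _ ↦ y)) μ) :
    ∫ x, g x * taylorRemainder n f x y ∂μ = ∫ x, g x * f (x + y) ∂μ -
      ∑ k ∈ Finset.range (n + 1),
        (k.factorial : ℝ)⁻¹ * ∫ x, g x * iteratedFDeriv ℝ k f x (fun _ ↦ y) ∂μ := by
  have hintTerm (k) (hk : k ∈ Finset.range (n + 1)) :
      Integrable (fun x ↦ (k.factorial : ℝ)⁻¹ * (g x * iteratedFDeriv ℝ k f x (fun _ ↦ y))) μ :=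
    (hintD k (Finset.mem_range_succ_iff.mp hk)).const_mul _
  simp_rw [← integral_const_mul]
  rw [← integral_finsetSum _ hintTerm, ← integral_sub hint (integrable_finsetSum _ hintTerm)]
  simp only [taylorRemainder, smul_eq_mul, mul_sub, Finset.mul_sum, mul_left_comm (g _)]

variable [BorelSpace E] [SecondCountableTopology E] {C : ℝ}

lemma integrable_mul_taylorRemainder_mul
    (hf : ContDiff ℝ (n + 1 : ℕ) f) (hC : ∀ z, ‖iteratedFDeriv ℝ (n + 1) f z‖ ≤ C)
    (hg : Integrable g μ) (hw : Integrable (fun y ↦ ‖y‖ ^ (n + 1) * w y) ν) :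
    Integrable (fun p : E × E ↦ g p.1 * (taylorRemainder n f p.1 p.2 * w p.2)) (μ.prod ν) := by
  -- Only `‖y‖ ^ (n + 1) * w y` is known to be measurable, so the power is moved from the
  -- remainder to the weight; at `y = 0` the remainder vanishes.
  have hquotient_meas : AEStronglyMeasurable
      (fun p : E × E ↦ taylorRemainder n f p.1 p.2 / ‖p.2‖ ^ (n + 1)) (μ.prod ν) := by
    have := (continuous_taylorRemainder (hf.of_le (mod_cast n.le_succ))).measurable
    exact Measurable.aestronglyMeasurable (by fun_prop)
  have hquotient_bound (p : E × E) : ‖taylorRemainder n f p.1 p.2 / ‖p.2‖ ^ (n + 1)‖ ≤ C := by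
    rw [norm_div, norm_pow, norm_norm]
    exact div_le_of_le_mul₀ (by positivity) ((norm_nonneg _).trans (hC 0))
      (norm_taylorRemainder_le hf hC _ _)
  refine ((hg.mul_prod hw).bdd_mul hquotient_meas (ae_of_all _ hquotient_bound)).congr
    (ae_of_all _ fun p ↦ ?_)
  rcases eq_or_ne p.2 0 with hp | hp
  · simp [hp, taylorRemainder_zero_right]
  · have := norm_ne_zero_iff.mpr hp
    simp only
    field_simp

lemma integral_mul_integral_taylorRemainder_swap [SFinite μ] [SFinite ν]
    (hf : ContDiff ℝ (n + 1 : ℕ) f) (hC : ∀ z, ‖iteratedFDeriv ℝ (n + 1) f z‖ ≤ C)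
    (hg : Integrable g μ) (hw : Integrable (fun y ↦ ‖y‖ ^ (n + 1) * w y) ν) :
    ∫ x, g x * ∫ y, taylorRemainder n f x y * w y ∂ν ∂μ =
      ∫ y, (∫ x, g x * taylorRemainder n f x y ∂μ) * w y ∂ν := by
  simp_rw [← integral_const_mul, ← integral_mul_const, mul_assoc]
  exact integral_integral_swap (integrable_mul_taylorRemainder_mul hf hC hg hw)

end Fubini

section Symmetry

variable {E : Type*} [NormedAddCommGroup E] [NormedSpace ℝ E] [FiniteDimensional ℝ E]
  [MeasurableSpace E] [BorelSpace E] {μ : Measure E} [μ.IsAddHaarMeasure]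
  {n : ℕ} {f g w : E → ℝ}

theorem integral_mul_taylorRemainder_comm_neg (hf : ContDiff ℝ n f) (hg : ContDiff ℝ n g)
    (hgs : HasCompactSupport g) (y : E) :
    ∫ x, g x * taylorRemainder n f x y ∂μ = ∫ x, f x * taylorRemainder n g x (-y) ∂μ := by
  have hcont {φ : E → ℝ} (hφ : ContDiff ℝ n φ) {k : ℕ} (hk : k ≤ n) (v : E) :
      Continuous fun x ↦ iteratedFDeriv ℝ k φ x (fun _ ↦ v) :=
    (hφ.continuous_iteratedFDeriv (mod_cast hk)).eval_const _
  have hgs_shift : HasCompactSupport fun x ↦ g (x + -y) :=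
    hgs.comp_homeomorph (Homeomorph.addRight (-y))
  have htranslate : ∫ x, g x * f (x + y) ∂μ = ∫ x, f x * g (x + -y) ∂μ := by
    rw [← integral_add_right_eq_self (fun x ↦ f x * g (x + -y)) y]
    simp_rw [add_neg_cancel_right, mul_comm]
  have hparts {k : ℕ} (hk : k ≤ n) :
      ∫ x, g x * iteratedFDeriv ℝ k f x (fun _ ↦ y) ∂μ =
        ∫ x, f x * iteratedFDeriv ℝ k g x (fun _ ↦ -y) ∂μ := by
    rw [integral_mul_iteratedFDeriv_apply_const (hf.of_le (mod_cast hk)) (hg.of_le (mod_cast hk))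
      hgs, ← integral_const_mul]
    simp_rw [iteratedFDeriv_apply_neg_const, smul_eq_mul, mul_left_comm (f _), mul_comm (f _)]
  rw [integral_mul_taylorRemainder_eq_sub_sum
      (integrable_mul_of_hasCompactSupport hg.continuous (by fun_prop) hgs)
      fun k hk ↦ integrable_mul_of_hasCompactSupport hg.continuous (hcont hf hk y) hgs,
    integral_mul_taylorRemainder_eq_sub_sum
      ((integrable_mul_of_hasCompactSupport (by fun_prop) hf.continuous hgs_shift).congr
        (ae_of_all _ fun x ↦ mul_comm _ _))
      fun k hk ↦ (integrable_mul_of_hasCompactSupport (hcont hg hk (-y)) hf.continuous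
        (hasCompactSupport_iteratedFDeriv_apply_const hgs k (-y))).congr
        (ae_of_all _ fun x ↦ mul_comm _ _), htranslate]
  congr 1
  exact Finset.sum_congr rfl fun k hk ↦ by rw [hparts (Finset.mem_range_succ_iff.mp hk)]

theorem integral_mul_integral_taylorRemainder_comm {ν : Measure E} [SFinite ν]
    [ν.IsNegInvariant] (hwsymm : ∀ y, w (-y) = w y)
    (hw : Integrable (fun y ↦ ‖y‖ ^ (n + 1) * w y) ν)
    (hf : ContDiff ℝ (n + 1 : ℕ) f) (hfs : HasCompactSupport f)
    (hg : ContDiff ℝ (n + 1 : ℕ) g) (hgs : HasCompactSupport g) :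
    ∫ x, g x * ∫ y, taylorRemainder n f x y * w y ∂ν ∂μ =
      ∫ x, f x * ∫ y, taylorRemainder n g x y * w y ∂ν ∂μ := by
  obtain ⟨Cf, hCf⟩ := (hfs.iteratedFDeriv (𝕜 := ℝ) (n + 1)).exists_bound_of_continuous
    (hf.continuous_iteratedFDeriv le_rfl)
  obtain ⟨Cg, hCg⟩ := (hgs.iteratedFDeriv (𝕜 := ℝ) (n + 1)).exists_bound_of_continuous
    (hg.continuous_iteratedFDeriv le_rfl)
  have hn : (n : WithTop ℕ∞) ≤ (n + 1 : ℕ) := mod_cast n.le_succ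
  calc ∫ x, g x * ∫ y, taylorRemainder n f x y * w y ∂ν ∂μ
      = ∫ y, (∫ x, g x * taylorRemainder n f x y ∂μ) * w y ∂ν :=
        integral_mul_integral_taylorRemainder_swap hf hCf
          (hg.continuous.integrable_of_hasCompactSupport hgs) hw
    _ = ∫ y, (∫ x, f x * taylorRemainder n g x (-y) ∂μ) * w (-y) ∂ν := by
        simp_rw [integral_mul_taylorRemainder_comm_neg (hf.of_le hn) (hg.of_le hn) hgs, hwsymm]
    _ = ∫ y, (∫ x, f x * taylorRemainder n g x y ∂μ) * w y ∂ν :=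
        integral_neg_eq_self (fun y ↦ (∫ x, f x * taylorRemainder n g x y ∂μ) * w y) ν
    _ = ∫ x, f x * ∫ y, taylorRemainder n g x y * w y ∂ν ∂μ :=
        (integral_mul_integral_taylorRemainder_swap hg hCg
          (hf.continuous.integrable_of_hasCompactSupport hfs) hw).symm

end Symmetry

section LevyOp

variable {d l : ℕ} {α : ℝ} {h f g : EuclideanSpace ℝ (Fin d) → ℝ}

lemma levyIntegrand_eq_taylorRemainder (l : ℕ) (f : EuclideanSpace ℝ (Fin d) → ℝ) :
    levyIntegrand l f = taylorRemainder (2 * l) f := by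
  ext x y
  rw [levyIntegrand, taylorRemainder, Finset.sum_range_eq_add_Ico _ (Nat.succ_pos _), sub_sub]
  simp [Finset.Ico_add_one_right_eq_Icc]

lemma norm_pow_mul_levyWeight (hα : α < 0) (y : EuclideanSpace ℝ (Fin d)) :
    ‖y‖ ^ (2 * l + 1) * levyWeight l α h y = ‖y‖ ^ (-α) * h y := by
  have hexponent : ((2 * l + 1 : ℕ) : ℝ) + -(2 * (l : ℝ) + 1 + α) = -α := by push_cast; ring
  rw [levyWeight, mul_left_comm, ← Real.rpow_natCast, ← Real.rpow_add' (norm_nonneg y)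
    (by rw [hexponent]; exact (neg_pos.mpr hα).ne'), hexponent, mul_comm]

lemma integrable_norm_pow_mul_levyWeight (hα : α < 0) {R : ℝ}
    (hint : IntegrableOn h (Metric.closedBall 0 R)) (hvan : ∀ y, R < ‖y‖ → h y = 0) :
    Integrable fun y ↦ ‖y‖ ^ (2 * l + 1) * levyWeight l α h y := by
  have hcont : Continuous fun y : EuclideanSpace ℝ (Fin d) ↦ ‖y‖ ^ (-α) :=
    continuous_norm.rpow_const fun _ ↦ .inr (neg_pos.mpr hα).le
  simp_rw [norm_pow_mul_levyWeight hα]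
  refine (integrableOn_iff_integrable_of_support_subset fun y hy ↦ ?_).mp
    (hint.continuousOn_mul hcont.continuousOn (isCompact_closedBall 0 R))
  contrapose! hy
  rw [Metric.mem_closedBall, dist_zero_right, not_le] at hy
  rw [Function.notMem_support, hvan y hy, mul_zero]

theorem levyOp_symmetric_general (hsymm : ∀ y, h (-y) = h y)
    (hint : Integrable fun y ↦ ‖y‖ ^ (2 * l + 1) * levyWeight l α h y)
    (hf : ContDiff ℝ (2 * l + 1 : ℕ) f) (hfsupp : HasCompactSupport f)
    (hg : ContDiff ℝ (2 * l + 1 : ℕ) g) (hgsupp : HasCompactSupport g) :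
    ∫ x, g x * levyOp l α h f x = ∫ x, f x * levyOp l α h g x := by
  have hwsymm : ∀ y, levyWeight l α h (-y) = levyWeight l α h y := fun y ↦ by
    simp only [levyWeight, hsymm, norm_neg]
  simp only [levyOp, levyIntegrand_eq_taylorRemainder, mul_left_comm _ ((-1 : ℝ) ^ (l + 1)),
    integral_const_mul]
  rw [integral_mul_integral_taylorRemainder_comm hwsymm hint hf hfsupp hg hgsupp]

end LevyOp

/-- the generalized Lévy operator is symmetric on `C_c^∞(ℝ^d)`:
`∫ g(x) Lf(x) dx = ∫ f(x) Lg(x) dx`. -/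
theorem levyOp_symmetric
    (d l : ℕ) (α : ℝ) (hα : α ∈ Set.Ioo (-1 : ℝ) 0)
    (h : EuclideanSpace ℝ (Fin d) → ℝ)
    (hmeas : Measurable h) (hpos : ∀ y, 0 ≤ h y)
    (M : ℝ) (hbd : ∀ y, h y ≤ M)
    (hsymm : ∀ y, h (-y) = h y)
    (R : ℝ) (hR : 0 < R) (hvan : ∀ y : EuclideanSpace ℝ (Fin d), R < ‖y‖ → h y = 0)
    (f g : EuclideanSpace ℝ (Fin d) → ℝ)
    (hf : ContDiff ℝ (⊤ : ℕ∞) f) (hfsupp : HasCompactSupport f)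
    (hg : ContDiff ℝ (⊤ : ℕ∞) g) (hgsupp : HasCompactSupport g) :
    ∫ x, g x * levyOp l α h f x = ∫ x, f x * levyOp l α h g x :=
  levyOp_symmetric_general hsymm
    (integrable_norm_pow_mul_levyWeight hα.2
      (Measure.integrableOn_of_bounded measure_closedBall_lt_top.ne hmeas.aestronglyMeasurable
        (ae_of_all _ fun y ↦ (Real.norm_of_nonneg (hpos y)).trans_le (hbd y))) hvan)
    (contDiff_infty.mp hf _) hfsupp (contDiff_infty.mp hg _) hgsupp
end
end

section
/- The symbol of the generalized Lévy operator is nonnegative: for every ξ ∈ ℝ^d, a(ξ) = (−1)^{l+1} ∫_{ℝ^d} ( cos⟨y,ξ⟩ − Σ_{j=0}^{l} (−1)^j ⟨y,ξ⟩^{2j}/(2j)! ) h(y)|y|^{−(2l+1+α)} dy is a convergent integral and a(ξ) ≥ 0. -/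
open scoped BigOperators
open MeasureTheory

noncomputable section

/-!
The Taylor remainder of the cosine has the sign of its first omitted term: the remainder of order
`l + 1` has second derivative minus the remainder of order `l`, so induction on `l` shows that, up
to the sign `(-1) ^ (l + 1)`, it is convex with a critical point, hence minimal, at the origin.
Consecutive remainders then have opposite signs and differ by one Taylor term, so each is bounded by
that term. This gives a factor `‖y‖ ^ (2 * (l + 1))`, which makes the singularity of the Lévy
density at the origin integrable.
-/

section TaylorRemainder

/-- The remainder of the Taylor polynomial of degree `2 * l` of the cosine at `0`. -/
def cosTaylorRemainder (l : ℕ) (x : ℝ) : ℝ :=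
  Real.cos x - ∑ j ∈ Finset.range (l + 1), (-1 : ℝ) ^ j * x ^ (2 * j) / (2 * j).factorial

/-- The remainder of the Taylor polynomial of degree `2 * l + 1` of the sine at `0`, which links
consecutive cosine remainders through differentiation. -/
def sinTaylorRemainder (l : ℕ) (x : ℝ) : ℝ :=
  Real.sin x - ∑ j ∈ Finset.range (l + 1), (-1 : ℝ) ^ j * x ^ (2 * j + 1) / (2 * j + 1).factorial

lemma cosTaylorRemainder_zero_right (l : ℕ) : cosTaylorRemainder l 0 = 0 := by
  simp [cosTaylorRemainder, Finset.sum_range_succ']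

lemma sinTaylorRemainder_zero_right (l : ℕ) : sinTaylorRemainder l 0 = 0 := by
  simp [sinTaylorRemainder]

lemma continuous_cosTaylorRemainder (l : ℕ) : Continuous (cosTaylorRemainder l) := by
  unfold cosTaylorRemainder
  fun_prop

lemma cosTaylorRemainder_succ (l : ℕ) (x : ℝ) :
    cosTaylorRemainder (l + 1) x = cosTaylorRemainder l x -
      (-1) ^ (l + 1) * (x ^ (2 * (l + 1)) / (2 * (l + 1)).factorial) := by
  rw [cosTaylorRemainder, cosTaylorRemainder, Finset.sum_range_succ _ (l + 1)]
  ring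

lemma hasDerivAt_const_mul_pow_succ_div_factorial (n : ℕ) (c x : ℝ) :
    HasDerivAt (fun t : ℝ ↦ c * t ^ (n + 1) / (n + 1).factorial) (c * x ^ n / n.factorial) x := by
  refine (((hasDerivAt_pow (n + 1) x).const_mul c).div_const _).congr_deriv ?_
  rw [Nat.factorial_succ]
  push_cast
  field_simp

lemma hasDerivAt_sinTaylorRemainder (l : ℕ) (x : ℝ) :
    HasDerivAt (sinTaylorRemainder l) (cosTaylorRemainder l x) x :=
  (Real.hasDerivAt_sin x).sub <| HasDerivAt.fun_sum fun j _ ↦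
    hasDerivAt_const_mul_pow_succ_div_factorial (2 * j) _ x

lemma hasDerivAt_cosTaylorRemainder_succ (l : ℕ) (x : ℝ) :
    HasDerivAt (cosTaylorRemainder (l + 1)) (-sinTaylorRemainder l x) x := by
  have hsum : HasDerivAt
      (fun t : ℝ ↦ ∑ j ∈ Finset.range (l + 2), (-1 : ℝ) ^ j * t ^ (2 * j) / (2 * j).factorial)
      (∑ j ∈ Finset.range (l + 1), (-1 : ℝ) ^ (j + 1) * x ^ (2 * j + 1) / (2 * j + 1).factorial)
      x := by
    simp only [Finset.sum_range_succ' _ (l + 1), mul_zero, pow_zero]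
    exact (HasDerivAt.fun_sum fun j _ ↦
      hasDerivAt_const_mul_pow_succ_div_factorial (2 * j + 1) _ x).add_const _
  refine ((Real.hasDerivAt_cos x).sub hsum).congr_deriv ?_
  simp only [sinTaylorRemainder, pow_succ (-1 : ℝ), mul_neg_one, neg_mul, neg_div,
    Finset.sum_neg_distrib, neg_sub, sub_neg_eq_add]
  ring

lemma apply_le_of_hasDerivAt_of_monotone {f f' : ℝ → ℝ} {a : ℝ}
    (hf : ∀ x, HasDerivAt f (f' x) x) (hf' : Monotone f') (ha : f' a = 0) (x : ℝ) :
    f a ≤ f x := by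
  have hderiv : deriv f = f' := funext fun y ↦ (hf y).deriv
  have hconvex : ConvexOn ℝ Set.univ f :=
    Monotone.convexOn_univ_of_deriv (fun y ↦ (hf y).differentiableAt) (hderiv ▸ hf')
  have hright : derivWithin f (Set.Ioi a) a = 0 :=
    ((hf a).hasDerivWithinAt.derivWithin (uniqueDiffWithinAt_Ioi a)).trans ha
  exact hconvex.isMinOn_of_rightDeriv_eq_zero (by simp) hright (Set.mem_univ x)

lemma neg_one_pow_mul_cosTaylorRemainder_nonneg (l : ℕ) (x : ℝ) :
    0 ≤ (-1) ^ (l + 1) * cosTaylorRemainder l x := by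
  induction l generalizing x with
  | zero => simp [cosTaylorRemainder, Real.cos_le_one]
  | succ l ih =>
    have hmono : Monotone fun t ↦ (-1) ^ (l + 1) * sinTaylorRemainder l t :=
      monotone_of_hasDerivAt_nonneg
        (fun t ↦ (hasDerivAt_sinTaylorRemainder l t).const_mul _) ih
    have hderiv (t : ℝ) : HasDerivAt (fun t ↦ (-1) ^ (l + 1 + 1) * cosTaylorRemainder (l + 1) t)
        ((-1) ^ (l + 1) * sinTaylorRemainder l t) t :=
      ((hasDerivAt_cosTaylorRemainder_succ l t).const_mul _).congr_deriv (by ring)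
    calc 0 = (-1) ^ (l + 1 + 1) * cosTaylorRemainder (l + 1) 0 := by
          rw [cosTaylorRemainder_zero_right, mul_zero]
      _ ≤ (-1) ^ (l + 1 + 1) * cosTaylorRemainder (l + 1) x :=
        apply_le_of_hasDerivAt_of_monotone hderiv hmono
          (by rw [sinTaylorRemainder_zero_right, mul_zero]) x

lemma abs_cosTaylorRemainder_le (l : ℕ) (x : ℝ) :
    |cosTaylorRemainder l x| ≤ x ^ (2 * (l + 1)) / (2 * (l + 1)).factorial := by
  have hsign : (-1 : ℝ) ^ (l + 1) * (-1) ^ (l + 1) = 1 := by simp [← mul_pow]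
  have hnext := neg_one_pow_mul_cosTaylorRemainder_nonneg (l + 1) x
  rw [cosTaylorRemainder_succ, pow_succ] at hnext
  calc |cosTaylorRemainder l x| = |(-1) ^ (l + 1) * cosTaylorRemainder l x| := by simp [abs_mul]
    _ = (-1) ^ (l + 1) * cosTaylorRemainder l x :=
      abs_of_nonneg (neg_one_pow_mul_cosTaylorRemainder_nonneg l x)
    _ ≤ x ^ (2 * (l + 1)) / (2 * (l + 1)).factorial := by
      linear_combination hnext + x ^ (2 * (l + 1)) / (2 * (l + 1)).factorial * hsign

end TaylorRemainder

section CosineIntegrand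

variable {E : Type*} [NormedAddCommGroup E] [InnerProductSpace ℝ E]

lemma abs_cosTaylorRemainder_inner_le (l : ℕ) (y ξ : E) :
    |cosTaylorRemainder l (inner ℝ y ξ)| ≤
      ‖ξ‖ ^ (2 * (l + 1)) / (2 * (l + 1)).factorial * ‖y‖ ^ (2 * (l + 1)) := by
  have heven : Even (2 * (l + 1)) := even_two_mul _
  calc |cosTaylorRemainder l (inner ℝ y ξ)|
      ≤ inner ℝ y ξ ^ (2 * (l + 1)) / (2 * (l + 1)).factorial := abs_cosTaylorRemainder_le l _
    _ = |inner ℝ y ξ| ^ (2 * (l + 1)) / (2 * (l + 1)).factorial := by rw [heven.pow_abs]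
    _ ≤ (‖y‖ * ‖ξ‖) ^ (2 * (l + 1)) / (2 * (l + 1)).factorial := by
      gcongr
      exact abs_real_inner_le_norm y ξ
    _ = ‖ξ‖ ^ (2 * (l + 1)) / (2 * (l + 1)).factorial * ‖y‖ ^ (2 * (l + 1)) := by ring

variable [MeasurableSpace E] {μ : Measure E} {w : E → ℝ}

lemma integrable_cosTaylorRemainder_inner_mul [OpensMeasurableSpace E] {l : ℕ}
    (hw : AEStronglyMeasurable w μ) (hint : Integrable (fun y ↦ ‖y‖ ^ (2 * (l + 1)) * w y) μ)
    (ξ : E) :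
    Integrable (fun y ↦ cosTaylorRemainder l (inner ℝ y ξ) * w y) μ := by
  have hcont : Continuous fun y : E ↦ cosTaylorRemainder l (inner ℝ y ξ) :=
    (continuous_cosTaylorRemainder l).comp (by fun_prop)
  refine (hint.const_mul (‖ξ‖ ^ (2 * (l + 1)) / (2 * (l + 1)).factorial)).mono
    (hcont.measurable.aestronglyMeasurable.mul hw) (.of_forall fun y ↦ ?_)
  calc ‖cosTaylorRemainder l (inner ℝ y ξ) * w y‖
      = |cosTaylorRemainder l (inner ℝ y ξ)| * ‖w y‖ := norm_mul _ _
    _ ≤ ‖ξ‖ ^ (2 * (l + 1)) / (2 * (l + 1)).factorial * ‖y‖ ^ (2 * (l + 1)) * ‖w y‖ := by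
      gcongr
      exact abs_cosTaylorRemainder_inner_le l y ξ
    _ = ‖‖ξ‖ ^ (2 * (l + 1)) / (2 * (l + 1)).factorial * (‖y‖ ^ (2 * (l + 1)) * w y)‖ := by
      simp [mul_assoc]

lemma neg_one_pow_mul_integral_cosTaylorRemainder_inner_mul_nonneg (hw : 0 ≤ w) (l : ℕ) (ξ : E) :
    0 ≤ (-1) ^ (l + 1) * ∫ y, cosTaylorRemainder l (inner ℝ y ξ) * w y ∂μ := by
  simp only [← integral_const_mul, ← mul_assoc]
  exact integral_nonneg fun y ↦
    mul_nonneg (neg_one_pow_mul_cosTaylorRemainder_nonneg l _) (hw y)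

end CosineIntegrand

section NormPower

variable {E : Type*} [NormedAddCommGroup E] [NormedSpace ℝ E] [FiniteDimensional ℝ E]
  [MeasurableSpace E] [BorelSpace E] {μ : Measure E} [μ.IsAddHaarMeasure]

lemma integrableOn_ball_norm_rpow {s r : ℝ} (hs : -(Module.finrank ℝ E : ℝ) < s) (hr : 0 < r) :
    IntegrableOn (fun y : E ↦ ‖y‖ ^ s) (Metric.ball 0 r) μ := by
  cases subsingleton_or_nontrivial E
  · exact Integrable.of_subsingleton.integrableOn
  have hdim : 1 ≤ Module.finrank ℝ E := Module.finrank_pos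
  have hradial : Set.EqOn (fun t : ℝ ↦ t ^ (Module.finrank ℝ E - 1 + s))
      (fun t ↦ t ^ (Module.finrank ℝ E - 1) • t ^ s) (Set.Ioo 0 r) := fun t ht ↦ by
    simp [Real.rpow_add ht.1, ← Real.rpow_natCast, Nat.cast_sub hdim]
  rw [integrableOn_fun_norm_addHaar μ (f := fun t ↦ t ^ s),
    ← integrableOn_congr_fun hradial measurableSet_Ioo,
    intervalIntegral.integrableOn_Ioo_rpow_iff hr]
  linarith

lemma locallyIntegrable_norm_rpow {s : ℝ} (hs : -(Module.finrank ℝ E : ℝ) < s) :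
    LocallyIntegrable (fun y : E ↦ ‖y‖ ^ s) μ := by
  refine locallyIntegrable_iff.2 fun K hK ↦ ?_
  obtain ⟨r, hr, hKr⟩ := hK.isBounded.subset_ball_lt 0 0
  exact (integrableOn_ball_norm_rpow hs hr).mono_set hKr

lemma integrable_norm_pow_mul_mul_norm_rpow {h : E → ℝ} {M R s : ℝ} {n : ℕ}
    (hmeas : AEStronglyMeasurable h μ) (hbd : ∀ y, ‖h y‖ ≤ M) (hvan : ∀ y, R < ‖y‖ → h y = 0)
    (hs : -(Module.finrank ℝ E : ℝ) < n + s) :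
    Integrable (fun y ↦ ‖y‖ ^ n * (h y * ‖y‖ ^ s)) μ := by
  have hsupp : Function.support (fun y ↦ ‖y‖ ^ n * (h y * ‖y‖ ^ s)) ⊆ Metric.closedBall 0 R := by
    intro y hy
    contrapose! hy
    simp [hvan y (by simpa using hy)]
  rw [← integrableOn_iff_integrable_of_support_subset hsupp]
  have hball : IntegrableOn (fun y : E ↦ ‖y‖ ^ (n + s)) (Metric.closedBall 0 R) μ :=
    (locallyIntegrable_norm_rpow hs).integrableOn_isCompact (isCompact_closedBall 0 R)
  have hnorm (t : ℝ) : Measurable fun y : E ↦ ‖y‖ ^ t := measurable_norm.pow_const t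
  refine (hball.const_mul M).mono' (AEStronglyMeasurable.restrict ?_) (.of_forall fun y ↦ ?_)
  · exact (measurable_norm.pow_const n).aestronglyMeasurable.mul
      (hmeas.mul (hnorm s).aestronglyMeasurable)
  calc ‖‖y‖ ^ n * (h y * ‖y‖ ^ s)‖ = ‖h y‖ * (‖y‖ ^ (n : ℝ) * ‖y‖ ^ s) := by
        simp [abs_of_nonneg, Real.rpow_nonneg, mul_left_comm]
    _ ≤ M * ‖y‖ ^ (n + s) :=
      mul_le_mul (hbd y) (Real.le_rpow_add (norm_nonneg y) n s) (by positivity)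
        ((norm_nonneg _).trans (hbd y))

end NormPower

theorem levySymbol_nonneg_general {E : Type*} [NormedAddCommGroup E] [InnerProductSpace ℝ E]
    [FiniteDimensional ℝ E] [MeasurableSpace E] [BorelSpace E] {μ : Measure E}
    [μ.IsAddHaarMeasure] {l : ℕ} {α : ℝ} (hα : α < Module.finrank ℝ E + 1)
    {h : E → ℝ} (hmeas : AEStronglyMeasurable h μ) (hpos : ∀ y, 0 ≤ h y)
    {M : ℝ} (hbd : ∀ y, h y ≤ M) {R : ℝ} (hvan : ∀ y, R < ‖y‖ → h y = 0) (ξ : E) :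
    Integrable (fun y ↦
      (Real.cos (inner ℝ y ξ) - ∑ j ∈ Finset.range (l + 1),
        (-1 : ℝ) ^ j * (inner ℝ y ξ : ℝ) ^ (2 * j) / (2 * j).factorial) *
        (h y * ‖y‖ ^ (-(2 * (l : ℝ) + 1 + α)))) μ ∧
    0 ≤ (-1 : ℝ) ^ (l + 1) * ∫ y,
      (Real.cos (inner ℝ y ξ) - ∑ j ∈ Finset.range (l + 1),
        (-1 : ℝ) ^ j * (inner ℝ y ξ : ℝ) ^ (2 * j) / (2 * j).factorial) *
        (h y * ‖y‖ ^ (-(2 * (l : ℝ) + 1 + α))) ∂μ := by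
  have hweight : AEStronglyMeasurable (fun y ↦ h y * ‖y‖ ^ (-(2 * (l : ℝ) + 1 + α))) μ :=
    hmeas.mul (measurable_norm.pow_const _).aestronglyMeasurable
  have hnorm (y : E) : ‖h y‖ ≤ M := (Real.norm_of_nonneg (hpos y)).trans_le (hbd y)
  -- Near the origin the integrand is of order `‖y‖ ^ (1 - α)`, hence the bound on `α`.
  have hmoment : Integrable
      (fun y ↦ ‖y‖ ^ (2 * (l + 1)) * (h y * ‖y‖ ^ (-(2 * (l : ℝ) + 1 + α)))) μ :=
    integrable_norm_pow_mul_mul_norm_rpow hmeas hnorm hvan (by push_cast; linarith)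
  exact ⟨integrable_cosTaylorRemainder_inner_mul hweight hmoment ξ,
    neg_one_pow_mul_integral_cosTaylorRemainder_inner_mul_nonneg
      (fun y ↦ mul_nonneg (hpos y) (by positivity)) l ξ⟩

/-- the symbol of the generalized Lévy operator is given by a convergent
integral and is nonnegative:
`a(ξ) = (−1)^{l+1} ∫ (cos⟨y,ξ⟩ − Σ_{j=0}^{l} (−1)^j ⟨y,ξ⟩^{2j}/(2j)!) h(y)|y|^{−(2l+1+α)} dy ≥ 0`. -/
theorem levySymbol_nonneg
    (d l : ℕ) (α : ℝ) (hα : α ∈ Set.Ioo (-1 : ℝ) 0)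
    (h : EuclideanSpace ℝ (Fin d) → ℝ)
    (hmeas : Measurable h) (hpos : ∀ y, 0 ≤ h y)
    (M : ℝ) (hbd : ∀ y, h y ≤ M)
    (hsymm : ∀ y, h (-y) = h y)
    (R : ℝ) (hR : 0 < R) (hvan : ∀ y : EuclideanSpace ℝ (Fin d), R < ‖y‖ → h y = 0)
    (ξ : EuclideanSpace ℝ (Fin d)) :
    Integrable (fun y : EuclideanSpace ℝ (Fin d) =>
      (Real.cos (inner ℝ y ξ) - ∑ j ∈ Finset.range (l + 1),
        (-1 : ℝ) ^ j * (inner ℝ y ξ : ℝ) ^ (2 * j) / (2 * j).factorial) *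
        levyWeight l α h y) ∧
    0 ≤ (-1 : ℝ) ^ (l + 1) * ∫ y,
      (Real.cos (inner ℝ y ξ) - ∑ j ∈ Finset.range (l + 1),
        (-1 : ℝ) ^ j * (inner ℝ y ξ : ℝ) ^ (2 * j) / (2 * j).factorial) *
        levyWeight l α h y :=
  levySymbol_nonneg_general (hα.2.trans (by positivity)) hmeas.aestronglyMeasurable hpos hbd hvan ξ
end
end
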